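/- Let k be a commutative ring, H an involutory Hopf algebra over k, and N a right H-comodule that is finitely generated projective as a k-module whose Hattori–Stallings rank r_k(N) is invertible in k. Then N*, with the coaction determined by f_{⟨1⟩} f_{⟨0⟩}(n) = S(n_{⟨1⟩}) f(n_{⟨0⟩}), is both a strong right dual and a strong left dual of N in the monoidal category of right H-comodules: the maps i_N : k → N ⊗ N*, a ↦ a Σ_i e_i ⊗ e_i*, and j_N : k → N* ⊗ N, a ↦ a Σ_i e_i* ⊗ e_i, are split monomorphisms of right H-comodules, with H-colinear retractions r_k(N)^{-1} ev_N and r_k(N)^{-1} ev'_N respectively. -/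

import Mathlib

open TensorProduct LinearMap

variable {k H : Type*} [CommRing k] [Ring H] [HopfAlgebra k H]

/-- A `k`-linear map `ρ : M → M ⊗ H` is a (coassociative, counital) right `H`-coaction,
i.e. it makes `M` a right `H`-comodule. -/
def IsCoaction {M : Type*} [AddCommGroup M] [Module k M] (ρ : M →ₗ[k] M ⊗[k] H) : Prop :=
  (LinearMap.rTensor H ρ ∘ₗ ρ =
      (TensorProduct.assoc k M H H).symm.toLinearMap ∘ₗ
        LinearMap.lTensor M (Coalgebra.comul (R := k)) ∘ₗ ρ) ∧
    ((TensorProduct.rid k M).toLinearMap ∘ₗ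
        LinearMap.lTensor M (Coalgebra.counit (R := k)) ∘ₗ ρ = LinearMap.id)

/-- The codiagonal coaction on the tensor product of two right `H`-comodules:
`m ⊗ n ↦ m⁽⁰⁾ ⊗ n⁽⁰⁾ ⊗ m⁽¹⁾ n⁽¹⁾`. -/
noncomputable def codiag {M N : Type*} [AddCommGroup M] [Module k M] [AddCommGroup N]
    [Module k N] (ρM : M →ₗ[k] M ⊗[k] H) (ρN : N →ₗ[k] N ⊗[k] H) :
    M ⊗[k] N →ₗ[k] (M ⊗[k] N) ⊗[k] H :=
  LinearMap.lTensor (M ⊗[k] N) (LinearMap.mul' k H) ∘ₗ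
    (TensorProduct.tensorTensorTensorComm k M H N H).toLinearMap ∘ₗ TensorProduct.map ρM ρN

/-!
For a functional `f` on `N` and `x : N`, let `c f x = x⁽¹⁾ f(x⁽⁰⁾)` be the matrix coefficient of
the coaction. The comodule axioms say that `c` is a comatrix, `Δ (c f x) = ∑ c f eᵢ ⊗ c εᵢ x`
with counit `f x`, so the antipode axioms give
`∑ c f eᵢ * S (c εᵢ x) = f x` and `∑ S (c f eᵢ) * c εᵢ x = f x`.
When `S² = id`, applying `S` exchanges the two factors in each. The dual coaction has coefficients
`S (c f x)`, and the coefficients of a codiagonal coaction at `f ⊗ g` are products. Testing against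
elementary tensors of functionals therefore turns the colinearity of the two coevaluations and the
two evaluations into these four identities.
-/

section DualBasis

variable {R M N ι κ : Type*} [CommSemiring R] [AddCommMonoid M] [Module R M]
  [AddCommMonoid N] [Module R N] [Fintype ι] [Fintype κ]

/-- The family `e` and the functionals `ε` form a dual basis of `M` in the sense of the dual basis
lemma for finitely generated projective modules; `e` need not be linearly independent. -/
def IsDualBasis (e : ι → M) (ε : ι → Module.Dual R M) : Prop :=
  ∀ x, ∑ i, ε i x • e i = x

namespace IsDualBasis

variable {e : ι → M} {ε : ι → Module.Dual R M} {e' : κ → N} {ε' : κ → Module.Dual R N}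

theorem sum_apply_mul_apply (he : IsDualBasis e ε) (f : Module.Dual R M) (x : M) :
    ∑ i, f (e i) * ε i x = f x := by
  simpa [mul_comm] using congrArg f (he x)

theorem dual (he : IsDualBasis e ε) : IsDualBasis ε fun i ↦ Module.Dual.eval R M (e i) :=
  fun f ↦ LinearMap.ext fun x ↦ by simpa using he.sum_apply_mul_apply f x

theorem tensor (he : IsDualBasis e ε) (he' : IsDualBasis e' ε') :
    IsDualBasis (fun p : ι × κ ↦ e p.1 ⊗ₜ[R] e' p.2)
      fun p ↦ dualDistrib R M N (ε p.1 ⊗ₜ ε' p.2) := by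
  intro t
  induction t with
  | zero => simp
  | add s t hs ht => simp only [map_add, add_smul, Finset.sum_add_distrib, hs, ht]
  | tmul x y =>
    simp only [Fintype.sum_prod_type, dualDistrib_apply, ← smul_tmul_smul, ← tmul_sum, ← sum_tmul,
      he x, he' y]

theorem sum_tmul_lid_rTensor {P : Type*} [AddCommMonoid P] [Module R P] (he : IsDualBasis e ε)
    (t : M ⊗[R] P) : ∑ i, e i ⊗ₜ TensorProduct.lid R P (rTensor P (ε i) t) = t := by
  induction t with
  | zero => simp
  | add s t hs ht => simp only [map_add, tmul_add, Finset.sum_add_distrib, hs, ht]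
  | tmul x p => simp only [rTensor_tmul, lid_tmul, ← smul_tmul, ← sum_tmul, he x]

theorem tensorProduct_ext {P : Type*} [AddCommMonoid P] [Module R P] (he : IsDualBasis e ε)
    {s t : M ⊗[R] P} (h : ∀ i, rTensor P (ε i) s = rTensor P (ε i) t) : s = t := by
  rw [← he.sum_tmul_lid_rTensor s, ← he.sum_tmul_lid_rTensor t]
  simp only [h]

theorem contractRight_eq (he : IsDualBasis e ε) :
    contractRight R M =
      ∑ i, dualDistrib R M (Module.Dual R M) (ε i ⊗ₜ Module.Dual.eval R M (e i)) := by
  ext x f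
  simpa [mul_comm] using (he.sum_apply_mul_apply f x).symm

theorem contractLeft_eq (he : IsDualBasis e ε) :
    contractLeft R M =
      ∑ i, dualDistrib R (Module.Dual R M) M (Module.Dual.eval R M (e i) ⊗ₜ ε i) := by
  ext f x
  simpa using (he.sum_apply_mul_apply f x).symm

end IsDualBasis

end DualBasis

section MatrixCoeff

variable {R C D M N : Type*} [CommSemiring R] [AddCommMonoid C] [Module R C]
  [AddCommMonoid D] [Module R D]
  [AddCommMonoid M] [Module R M] [AddCommMonoid N] [Module R N]

/-- The matrix coefficient `x⁽¹⁾ f(x⁽⁰⁾)` of a map `ρ : M → M ⊗ C`, as a bilinear function of the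
functional `f` and the element `x`. -/
noncomputable def matrixCoeff (ρ : M →ₗ[R] M ⊗[R] C) : Module.Dual R M →ₗ[R] M →ₗ[R] C :=
  LinearMap.mk₂ R (fun f x ↦ TensorProduct.lid R C (rTensor C f (ρ x)))
    (by simp [rTensor_add]) (by simp [rTensor_smul]) (by simp) (by simp)

theorem matrixCoeff_apply (ρ : M →ₗ[R] M ⊗[R] C) (f : Module.Dual R M) (x : M) :
    matrixCoeff ρ f x = TensorProduct.lid R C (rTensor C f (ρ x)) :=
  rfl

theorem map_matrixCoeff (T : C →ₗ[R] D) (ρ : M →ₗ[R] M ⊗[R] C) (f : Module.Dual R M) (x : M) :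
    T (matrixCoeff ρ f x) = TensorProduct.lid R D (TensorProduct.map f T (ρ x)) := by
  have natural : T ∘ₗ (TensorProduct.lid R C).toLinearMap ∘ₗ rTensor C f =
      (TensorProduct.lid R D).toLinearMap ∘ₗ TensorProduct.map f T := by
    ext
    simp
  exact LinearMap.congr_fun natural (ρ x)

theorem IsDualBasis.sum_tmul_matrixCoeff {ι : Type*} [Fintype ι] {e : ι → M}
    {ε : ι → Module.Dual R M} (he : IsDualBasis e ε) (ρ : M →ₗ[R] M ⊗[R] C) (x : M) :
    ∑ i, e i ⊗ₜ matrixCoeff ρ (ε i) x = ρ x :=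
  he.sum_tmul_lid_rTensor (ρ x)

/-- `φ` is a morphism of right comodules from `(M, ρM)` to `(N, ρN)`. -/
def IsColinear (ρM : M →ₗ[R] M ⊗[R] C) (ρN : N →ₗ[R] N ⊗[R] C) (φ : M →ₗ[R] N) : Prop :=
  ρN ∘ₗ φ = rTensor C φ ∘ₗ ρM

theorem IsColinear.smul {ρM : M →ₗ[R] M ⊗[R] C} {ρN : N →ₗ[R] N ⊗[R] C} {φ : M →ₗ[R] N}
    (h : IsColinear ρM ρN φ) (a : R) : IsColinear ρM ρN (a • φ) := by
  unfold IsColinear at h ⊢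
  rw [comp_smul, h, rTensor_smul, smul_comp]

end MatrixCoeff

section TrivialCoaction

variable {R A M : Type*} [CommSemiring R] [Semiring A] [Algebra R A] [AddCommMonoid M] [Module R M]

variable (R A) in
/-- The coaction `a ↦ a ⊗ 1` on the base ring, the unit object of right comodules. -/
noncomputable def trivialCoaction : R →ₗ[R] R ⊗[R] A :=
  (TensorProduct.mk R R A).flip 1

theorem isColinear_trivialCoaction_right {ρ : M →ₗ[R] M ⊗[R] A} {f : Module.Dual R M}
    (h : matrixCoeff ρ f = toSpanSingleton R A 1 ∘ₗ f) : IsColinear ρ (trivialCoaction R A) f :=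
  LinearMap.ext fun x ↦ (TensorProduct.lid R A).injective <| by
    simpa [trivialCoaction, matrixCoeff_apply] using (LinearMap.congr_fun h x).symm

theorem IsDualBasis.isColinear_toSpanSingleton {ι : Type*} [Fintype ι] {e : ι → M}
    {ε : ι → Module.Dual R M} (he : IsDualBasis e ε) {ρ : M →ₗ[R] M ⊗[R] A} {m : M}
    (h : ∀ i, matrixCoeff ρ (ε i) m = ε i m • 1) :
    IsColinear (trivialCoaction R A) ρ (toSpanSingleton R M m) := by
  refine LinearMap.ext_ring (he.tensorProduct_ext fun i ↦ (TensorProduct.lid R A).injective ?_)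
  simpa [trivialCoaction, matrixCoeff_apply] using h i

end TrivialCoaction

section Codiagonal

variable {M N : Type*} [AddCommGroup M] [Module k M] [AddCommGroup N] [Module k N]

theorem matrixCoeff_codiag (ρM : M →ₗ[k] M ⊗[k] H) (ρN : N →ₗ[k] N ⊗[k] H)
    (f : Module.Dual k M) (g : Module.Dual k N) (x : M) (y : N) :
    matrixCoeff (codiag ρM ρN) (dualDistrib k M N (f ⊗ₜ g)) (x ⊗ₜ y) =
      matrixCoeff ρM f x * matrixCoeff ρN g y := by
  simp only [matrixCoeff_apply, codiag, comp_apply, map_tmul]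
  generalize ρM x = s
  generalize ρN y = t
  induction s with
  | zero => simp
  | add s s' hs hs' => simp only [add_tmul, map_add, add_mul, hs, hs']
  | tmul m a =>
    induction t with
    | zero => simp
    | add t t' ht ht' => simp only [tmul_add, map_add, mul_add, ht, ht']
    | tmul n b => simp [mul_smul, smul_comm (f m)]

end Codiagonal

section Comatrix

variable {M ι : Type*} [AddCommGroup M] [Module k M] [Fintype ι] {ρ : M →ₗ[k] M ⊗[k] H}
  {e : ι → M} {ε : ι → Module.Dual k M}

theorem counit_matrixCoeff (hρ : IsCoaction ρ) (f : Module.Dual k M) (x : M) :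
    Coalgebra.counit (R := k) (matrixCoeff ρ f x) = f x := by
  have natural : (TensorProduct.lid k k).toLinearMap ∘ₗ TensorProduct.map f Coalgebra.counit =
      f ∘ₗ (TensorProduct.rid k M).toLinearMap ∘ₗ lTensor M (Coalgebra.counit (A := H)) := by
    ext
    simp [mul_comm]
  calc
    _ = TensorProduct.lid k k (TensorProduct.map f Coalgebra.counit (ρ x)) := map_matrixCoeff ..
    _ = f (TensorProduct.rid k M (lTensor M Coalgebra.counit (ρ x))) :=
      LinearMap.congr_fun natural (ρ x)
    _ = f x := congrArg f (LinearMap.congr_fun hρ.2 x)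

theorem comul_matrixCoeff_eq_rTensor (hρ : IsCoaction ρ) (f : Module.Dual k M) (x : M) :
    Coalgebra.comul (R := k) (matrixCoeff ρ f x) = rTensor H (matrixCoeff ρ f) (ρ x) := by
  have coassoc : lTensor M (Coalgebra.comul (R := k)) (ρ x) =
      TensorProduct.assoc k M H H (rTensor H ρ (ρ x)) := by
    simpa using congrArg (TensorProduct.assoc k M H H) (LinearMap.congr_fun hρ.1 x).symm
  have contract_assoc : (TensorProduct.lid k (H ⊗[k] H)).toLinearMap ∘ₗ rTensor (H ⊗[k] H) f ∘ₗ
      (TensorProduct.assoc k M H H).toLinearMap =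
        rTensor H ((TensorProduct.lid k H).toLinearMap ∘ₗ rTensor H f) := by
    ext
    simp [smul_tmul']
  calc
    _ = TensorProduct.lid k _ (TensorProduct.map f Coalgebra.comul (ρ x)) := map_matrixCoeff ..
    _ = TensorProduct.lid k _ (rTensor _ f (lTensor M Coalgebra.comul (ρ x))) := by
      rw [← comp_apply (rTensor _ f), rTensor_comp_lTensor]
    _ = TensorProduct.lid k _
        (rTensor _ f (TensorProduct.assoc k M H H (rTensor H ρ (ρ x)))) := by rw [coassoc]
    _ = rTensor H ((TensorProduct.lid k H).toLinearMap ∘ₗ rTensor H f) (rTensor H ρ (ρ x)) :=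
      LinearMap.congr_fun contract_assoc _
    _ = rTensor H (matrixCoeff ρ f) (ρ x) := (rTensor_comp_apply ..).symm

theorem comul_matrixCoeff (hρ : IsCoaction ρ) (he : IsDualBasis e ε) (f : Module.Dual k M) (x : M) :
    Coalgebra.comul (R := k) (matrixCoeff ρ f x) =
      ∑ i, matrixCoeff ρ f (e i) ⊗ₜ[k] matrixCoeff ρ (ε i) x := by
  rw [comul_matrixCoeff_eq_rTensor hρ, ← he.sum_tmul_matrixCoeff ρ x]
  simp

theorem sum_matrixCoeff_mul_antipode (hρ : IsCoaction ρ) (he : IsDualBasis e ε)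
    (f : Module.Dual k M) (x : M) :
    ∑ i, matrixCoeff ρ f (e i) * HopfAlgebra.antipode k (matrixCoeff ρ (ε i) x) =
      f x • (1 : H) := by
  simpa [comul_matrixCoeff hρ he, counit_matrixCoeff hρ, Algebra.algebraMap_eq_smul_one] using
    HopfAlgebra.mul_antipode_lTensor_comul_apply (R := k) (matrixCoeff ρ f x)

theorem sum_antipode_matrixCoeff_mul (hρ : IsCoaction ρ) (he : IsDualBasis e ε)
    (f : Module.Dual k M) (x : M) :
    ∑ i, HopfAlgebra.antipode k (matrixCoeff ρ f (e i)) * matrixCoeff ρ (ε i) x =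
      f x • (1 : H) := by
  simpa [comul_matrixCoeff hρ he, counit_matrixCoeff hρ, Algebra.algebraMap_eq_smul_one] using
    HopfAlgebra.mul_antipode_rTensor_comul_apply (R := k) (matrixCoeff ρ f x)

variable (hS : Function.Involutive (HopfAlgebra.antipode k : H →ₗ[k] H))
include hS

theorem sum_matrixCoeff_mul_antipode_swap (hρ : IsCoaction ρ) (he : IsDualBasis e ε)
    (f : Module.Dual k M) (x : M) :
    ∑ i, matrixCoeff ρ (ε i) x * HopfAlgebra.antipode k (matrixCoeff ρ f (e i)) =
      f x • (1 : H) := by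
  simpa [HopfAlgebra.antipode_mul_antidistrib, hS _] using
    congrArg (HopfAlgebra.antipode k) (sum_matrixCoeff_mul_antipode hρ he f x)

theorem sum_antipode_matrixCoeff_mul_swap (hρ : IsCoaction ρ) (he : IsDualBasis e ε)
    (f : Module.Dual k M) (x : M) :
    ∑ i, HopfAlgebra.antipode k (matrixCoeff ρ (ε i) x) * matrixCoeff ρ f (e i) =
      f x • (1 : H) := by
  simpa [HopfAlgebra.antipode_mul_antidistrib, hS _] using
    congrArg (HopfAlgebra.antipode k) (sum_antipode_matrixCoeff_mul hρ he f x)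

end Comatrix

section DualCoaction

variable {N ι : Type*} [AddCommGroup N] [Module k N] [Fintype ι] {ρ : N →ₗ[k] N ⊗[k] H}
  {σ : Module.Dual k N →ₗ[k] Module.Dual k N ⊗[k] H} {e : ι → N} {ε : ι → Module.Dual k N}

/-- `σ` is the coaction on `N*` dual to `ρ`: `f⁽¹⁾ f⁽⁰⁾(x) = S(x⁽¹⁾) f(x⁽⁰⁾)`. -/
def IsDualCoaction (ρ : N →ₗ[k] N ⊗[k] H)
    (σ : Module.Dual k N →ₗ[k] Module.Dual k N ⊗[k] H) : Prop :=
  ∀ f x, matrixCoeff σ (Module.Dual.eval k N x) f = HopfAlgebra.antipode k (matrixCoeff ρ f x)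

namespace IsDualCoaction

theorem isColinear_coevRight (hσ : IsDualCoaction ρ σ) (hρ : IsCoaction ρ)
    (he : IsDualBasis e ε) :
    IsColinear (trivialCoaction k H) (codiag ρ σ)
      (toSpanSingleton k (N ⊗[k] Module.Dual k N) (∑ i, e i ⊗ₜ[k] ε i)) :=
  (he.tensor he.dual).isColinear_toSpanSingleton fun ⟨i, j⟩ ↦ by
    simpa [matrixCoeff_codiag, hσ _ _, he.sum_apply_mul_apply] using
      sum_matrixCoeff_mul_antipode hρ he (ε i) (e j)

theorem isColinear_contractLeft (hσ : IsDualCoaction ρ σ) (hρ : IsCoaction ρ)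
    (he : IsDualBasis e ε) :
    IsColinear (codiag σ ρ) (trivialCoaction k H) (contractLeft k N) := by
  refine isColinear_trivialCoaction_right (TensorProduct.ext' fun f x ↦ ?_)
  rw [comp_apply, toSpanSingleton_apply, contractLeft_apply,
    ← sum_antipode_matrixCoeff_mul hρ he, he.contractLeft_eq]
  simp only [map_sum, LinearMap.sum_apply, matrixCoeff_codiag, hσ _ _]

variable (hS : Function.Involutive (HopfAlgebra.antipode k : H →ₗ[k] H))
include hS

theorem isColinear_coevLeft (hσ : IsDualCoaction ρ σ) (hρ : IsCoaction ρ)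
    (he : IsDualBasis e ε) :
    IsColinear (trivialCoaction k H) (codiag σ ρ)
      (toSpanSingleton k (Module.Dual k N ⊗[k] N) (∑ i, ε i ⊗ₜ[k] e i)) :=
  (he.dual.tensor he).isColinear_toSpanSingleton fun ⟨i, j⟩ ↦ by
    simpa [matrixCoeff_codiag, hσ _ _, mul_comm (ε _ (e i)), he.sum_apply_mul_apply] using
      sum_antipode_matrixCoeff_mul_swap hS hρ he (ε j) (e i)

theorem isColinear_contractRight (hσ : IsDualCoaction ρ σ) (hρ : IsCoaction ρ)
    (he : IsDualBasis e ε) :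
    IsColinear (codiag ρ σ) (trivialCoaction k H) (contractRight k N) := by
  refine isColinear_trivialCoaction_right (TensorProduct.ext' fun x f ↦ ?_)
  rw [comp_apply, toSpanSingleton_apply, contractRight_apply,
    ← sum_matrixCoeff_mul_antipode_swap hS hρ he, he.contractRight_eq]
  simp only [map_sum, LinearMap.sum_apply, matrixCoeff_codiag, hσ _ _]

end IsDualCoaction

end DualCoaction

theorem units_inv_smul_comp_toSpanSingleton {R M : Type*} [CommSemiring R] [AddCommMonoid M]
    [Module R M] (u : Rˣ) (f : Module.Dual R M) {m : M} (h : f m = u) :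
    (u⁻¹ • f) ∘ₗ toSpanSingleton R M m = LinearMap.id := by
  ext
  simp [h, Units.smul_def]

/-- **Strong duality for comodules over an involutory Hopf algebra.**  Let `H` be an
involutory Hopf algebra over a commutative ring `k` and `N` a right `H`-comodule (with
coaction `ρ`), finitely generated projective over `k` with canonical element
`∑ i, e i ⊗ ε i` and invertible Hattori–Stallings rank `r = ∑ i, ε i (e i)`.  Then `N*`,
with the coaction `σ` determined by `f⁽¹⁾ f⁽⁰⁾(x) = S(x⁽¹⁾) f(x⁽⁰⁾)`, is a strong right
and strong left dual of `N` in the category of right `H`-comodules: the maps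
`i_N : k → N ⊗ N*` and `j_N : k → N* ⊗ N` are `H`-colinear split monomorphisms, with
`H`-colinear retractions `r⁻¹ • ev_N` and `r⁻¹ • ev'_N` respectively. -/
theorem strong_dual_of_comodule {N : Type*} [AddCommGroup N] [Module k N]
    (hinv : ∀ h : H, HopfAlgebra.antipode (R := k) (HopfAlgebra.antipode (R := k) h) = h)
    (ρ : N →ₗ[k] N ⊗[k] H) (hρ : IsCoaction ρ)
    (n : ℕ) (e : Fin n → N) (ε : Fin n → Module.Dual k N)
    (hdb1 : ∀ x : N, ∑ i, ε i x • e i = x)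
    (hdb2 : ∀ f : Module.Dual k N, ∑ i, f (e i) • ε i = f)
    (hr : IsUnit (∑ i, ε i (e i)))
    (σ : Module.Dual k N →ₗ[k] Module.Dual k N ⊗[k] H) (hσ : IsCoaction σ)
    (hσchar : ∀ (f : Module.Dual k N) (x : N),
      (TensorProduct.lid k H)
          (TensorProduct.map (Module.Dual.eval k N x) LinearMap.id (σ f)) =
        (TensorProduct.lid k H)
          (TensorProduct.map f (HopfAlgebra.antipode (R := k)) (ρ x))) :
    -- `i_N` is `H`-colinear (`k` carries the trivial coaction `a ↦ a ⊗ 1`)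
    (codiag ρ σ ∘ₗ
        LinearMap.toSpanSingleton k (N ⊗[k] Module.Dual k N) (∑ i, e i ⊗ₜ[k] ε i) =
      LinearMap.rTensor H
          (LinearMap.toSpanSingleton k (N ⊗[k] Module.Dual k N) (∑ i, e i ⊗ₜ[k] ε i)) ∘ₗ
        (TensorProduct.mk k k H).flip 1) ∧
    -- the retraction `r⁻¹ • ev_N` is `H`-colinear
    ((TensorProduct.mk k k H).flip 1 ∘ₗ ((hr.unit⁻¹ : kˣ) • contractRight k N) =
      LinearMap.rTensor H ((hr.unit⁻¹ : kˣ) • contractRight k N) ∘ₗ codiag ρ σ) ∧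
    -- `r⁻¹ • ev_N` is a retraction of `i_N`, so `i_N` is a split mono of `H`-comodules
    (((hr.unit⁻¹ : kˣ) • contractRight k N) ∘ₗ
        LinearMap.toSpanSingleton k (N ⊗[k] Module.Dual k N) (∑ i, e i ⊗ₜ[k] ε i) =
      LinearMap.id) ∧
    -- `j_N` is `H`-colinear
    (codiag σ ρ ∘ₗ
        LinearMap.toSpanSingleton k (Module.Dual k N ⊗[k] N) (∑ i, ε i ⊗ₜ[k] e i) =
      LinearMap.rTensor H
          (LinearMap.toSpanSingleton k (Module.Dual k N ⊗[k] N) (∑ i, ε i ⊗ₜ[k] e i)) ∘ₗ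
        (TensorProduct.mk k k H).flip 1) ∧
    -- the retraction `r⁻¹ • ev'_N` is `H`-colinear
    ((TensorProduct.mk k k H).flip 1 ∘ₗ ((hr.unit⁻¹ : kˣ) • contractLeft k N) =
      LinearMap.rTensor H ((hr.unit⁻¹ : kˣ) • contractLeft k N) ∘ₗ codiag σ ρ) ∧
    -- `r⁻¹ • ev'_N` is a retraction of `j_N`, so `j_N` is a split mono of `H`-comodules
    (((hr.unit⁻¹ : kˣ) • contractLeft k N) ∘ₗ
        LinearMap.toSpanSingleton k (Module.Dual k N ⊗[k] N) (∑ i, ε i ⊗ₜ[k] e i) =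
      LinearMap.id) := by
  have he : IsDualBasis e ε := hdb1
  have hdual : IsDualCoaction ρ σ := fun f x ↦ (hσchar f x).trans (map_matrixCoeff _ ρ f x).symm
  exact ⟨hdual.isColinear_coevRight hρ he,
    (hdual.isColinear_contractRight hinv hρ he).smul _,
    units_inv_smul_comp_toSpanSingleton _ _ (by simp),
    hdual.isColinear_coevLeft hinv hρ he,
    (hdual.isColinear_contractLeft hρ he).smul _,
    units_inv_smul_comp_toSpanSingleton _ _ (by simp)⟩
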